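/- For all n ≥ k ≥ 1 and every parallelogram polyomino P ∈ PP(n−k+1, k), the area of P equals the area of the noncrossing partition η(P), i.e., area(P) = Σ_{β,β'∈η(P)} #{ i ∈ β' : i < max β < max β' }, where the sum is over ordered pairs of blocks of η(P). -/

import Mathlib

namespace QtN

/-! ### Lattice paths and parallelogram polyominoes -/

/-- A step of a lattice path: east or north. -/
inductive Step : Type
  | E : Step
  | N : Step
  deriving DecidableEq, Repr

/-- Number of east steps of a path. -/
def countE (w : List Step) : ℕ := w.count Step.E

/-- Number of north steps of a path. -/
def countN (w : List Step) : ℕ := w.count Step.N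

/-- Endpoint of a path started at the origin. -/
def pathPos (w : List Step) : ℕ × ℕ := (countE w, countN w)

/-- The set of lattice points visited by a path started at the origin. -/
def pathPts (w : List Step) : Finset (ℕ × ℕ) :=
  ((List.range (w.length + 1)).map (fun i => pathPos (w.take i))).toFinset

/-- `colHeightsAux w h`: for each east step of `w` (in order), the number of north
steps preceding it, starting with `h` north steps already performed. -/
def colHeightsAux : List Step → ℕ → List ℕ
  | [], _ => []
  | Step.E :: r, h => h :: colHeightsAux r h
  | Step.N :: r, h => colHeightsAux r (h + 1)

/-- Height at which the path `w` crosses the vertical strip `i ≤ x ≤ i + 1`. -/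
def colHeight (w : List Step) (i : ℕ) : ℕ := (colHeightsAux w 0).getD i 0

/-- A parallelogram polyomino of size `m × n`: a pair of monotone lattice paths from
`(0,0)` to `(m,n)` (east/north steps), the upper path staying weakly above the lower
path, and the two paths meeting only at `(0,0)` and `(m,n)`. -/
structure Polyomino (m n : ℕ) : Type where
  lower : List Step
  upper : List Step
  lowerE : countE lower = m
  lowerN : countN lower = n
  upperE : countE upper = m
  upperN : countN upper = n
  above : ∀ i < m, colHeight lower i ≤ colHeight upper i
  meet : pathPts upper ∩ pathPts lower = {(0, 0), (m, n)}

/-- The area statistic: number of unit squares between the two paths,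
minus `(m + n - 1)`. -/
def area {m n : ℕ} (P : Polyomino m n) : ℕ :=
  (∑ i ∈ Finset.range m, (colHeight P.upper i - colHeight P.lower i)) - (m + n - 1)

/-- Where an eastward run at height `y`, starting at `x`, first hits the lower path. -/
def eastTarget (hL : ℕ → ℕ) (m x y : ℕ) : ℕ :=
  ((List.range m).filter (fun i => decide (x ≤ i ∧ y ≤ hL i))).headD m

/-- Total bounce contribution: from state `(x, y)` just after the `j`-th east-to-north
turn (counting the turns made so far), alternately go north until hitting the upper
path and east until hitting the lower path, each step contributing the number of
east-to-north turns preceding it. -/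
def bounceAux (hU hL : ℕ → ℕ) (m n : ℕ) : ℕ → ℕ → ℕ → ℕ → ℕ
  | 0, _, _, _ => 0
  | fuel + 1, x, y, j =>
    if x = m ∧ y = n then 0
    else
      let y' := hU (x - 1)
      let x' := if y' = n then m else eastTarget hL m x y'
      (j + 1) * ((y' - y) + (x' - x)) + bounceAux hU hL m n fuel x' y' (j + 1)

/-- The bounce statistic of a parallelogram polyomino: the bounce path starts with a
single east step (contributing `0`) and then alternates north runs (to the ceiling)
and east runs (to the floor); each step contributes the number of east-to-north turns
preceding it; finally `(m + n - 1)` is subtracted. -/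
def bounce {m n : ℕ} (P : Polyomino m n) : ℕ :=
  bounceAux (colHeight P.upper) (colHeight P.lower) m n (m + n + 2) 1 0 0 - (m + n - 1)

/-! ### Set partitions and noncrossing partitions -/

/-- Maximum of a finite set of naturals (`0` for the empty set). -/
def fmax (β : Finset ℕ) : ℕ := β.sup id

/-- Minimum of a finite set of naturals (`0` for the empty set). -/
def fmin (β : Finset ℕ) : ℕ := if h : β.Nonempty then β.min' h else 0

/-- A set partition of `{1, …, n}`, given by its finite set of blocks. -/
structure SetPartition (n : ℕ) : Type where
  blocks : Finset (Finset ℕ)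
  not_empty_mem : ∅ ∉ blocks
  cover : ∀ i : ℕ, i ∈ Finset.Icc 1 n ↔ ∃ β ∈ blocks, i ∈ β
  disjoint : ∀ β ∈ blocks, ∀ γ ∈ blocks, β ≠ γ → Disjoint β γ

/-- A family of blocks is noncrossing if there are no `a < b < c < d` with
`a, c` in one block and `b, d` in a different block. -/
def IsNoncrossing (bs : Finset (Finset ℕ)) : Prop :=
  ∀ a b c d : ℕ, a < b → b < c → c < d →
    ∀ β ∈ bs, ∀ γ ∈ bs, a ∈ β → c ∈ β → b ∈ γ → d ∈ γ → β = γ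

/-- `NC n k`: noncrossing partitions of `{1, …, n}` with exactly `n - k + 1` blocks. -/
abbrev NC (n k : ℕ) : Type :=
  {P : SetPartition n // IsNoncrossing P.blocks ∧ P.blocks.card = n - k + 1}

/-- The skip statistic: `∑_{β} (max β - min β - |β| + 1)`. -/
def skip (bs : Finset (Finset ℕ)) : ℕ :=
  ∑ β ∈ bs, ((fmax β + 1 - fmin β) - β.card)

/-- The non-singleton blocks of a partition. -/
def nsBlocks (bs : Finset (Finset ℕ)) : Finset (Finset ℕ) :=
  bs.filter (fun β => 2 ≤ β.card)

/-- The block of `bs` containing `x` (junk if there is not exactly one). -/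
def blockContaining (bs : Finset (Finset ℕ)) (x : ℕ) : Finset ℕ :=
  (bs.filter (fun β => x ∈ β)).sup id

/-- For a noncrossing partition in `NC n 3`, the quadruple `(a, b, c, d)` describing its
non-singleton blocks: for two pair blocks `{a,b}` and `{c,d}` (with `a` the global
minimum) this is `(a, b, c, d)`; for a single triple block `{a, b, c}` (`a < b < c`)
this is `(a, b, b, c)`. -/
def blockQuad (bs : Finset (Finset ℕ)) : ℕ × ℕ × ℕ × ℕ :=
  let A := blockContaining (nsBlocks bs) (fmin ((nsBlocks bs).sup id))
  if (nsBlocks bs).card = 1 then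
    let l := A.sort (· ≤ ·)
    (l.getD 0 0, l.getD 1 0, l.getD 1 0, l.getD 2 0)
  else
    let B := ((nsBlocks bs).erase A).sup id
    (fmin A, fmax A, fmin B, fmax B)

/-- The leap statistic on `NC n 3`: `leap(ab|cd) = c - 2 + max(0, c - b)`,
and `leap({a,b,c}) = b - 2` (the case `b = c`). -/
def leap (bs : Finset (Finset ℕ)) : ℕ :=
  let (_, b, c, _) := blockQuad bs
  (c - 2) + (c - b)

/-- The skew statistic on `NC n 3`: `skew(ab|cd) = c - 2 + a` if `b < c`, else `c - 2`;
`skew({a,b,c}) = b - 2` (the case `b = c`). -/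
def skew (bs : Finset (Finset ℕ)) : ℕ :=
  let (a, b, c, _) := blockQuad bs
  if b < c then c - 2 + a else c - 2

/-- The mag statistic on `NC n 3`: `mag(ab|cd) = a + max(b, c) - 2 - ⌈(b - a)/2⌉`,
and `mag({a,b,c}) = a + b - 2 - ⌈(b - a)/2⌉` (the case `b = c`). -/
def mag (bs : Finset (Finset ℕ)) : ℕ :=
  let (a, b, c, _) := blockQuad bs
  a + max b c - 2 - (b - a + 1) / 2

/-- The area statistic on noncrossing partitions:
`area(π) = ∑_{β, β' ∈ π} #{ i ∈ β' : i < max β < max β' }` (ordered pairs of blocks). -/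
def ncArea (bs : Finset (Finset ℕ)) : ℕ :=
  ∑ β ∈ bs, ∑ γ ∈ bs, (γ.filter (fun i => i < fmax β ∧ fmax β < fmax γ)).card

/-- The elements of the non-singleton blocks, listed in increasing order, with
the middle element of a size-3 block listed twice. -/
def nsList (bs : Finset (Finset ℕ)) : List ℕ :=
  let l := ((nsBlocks bs).sup id).sort (· ≤ ·)
  if l.length = 3 then [l.getD 0 0, l.getD 1 0, l.getD 1 0, l.getD 2 0] else l

/-- The multiset of block sizes of a partition. -/
def blockSizes (bs : Finset (Finset ℕ)) : Multiset ℕ := bs.val.map Finset.card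

/-- The image of a partition of `{1, …, n}` under the flip `i ↦ n + 1 - i`. -/
def flipBlocks (n : ℕ) (bs : Finset (Finset ℕ)) : Finset (Finset ℕ) :=
  bs.image (fun β => β.image (fun i => n + 1 - i))

/-! ### The mingarc statistic -/

/-- The gaps `ν_r = m_{r+1} - m_r - 1` between consecutive block minima
`m_1 < ⋯ < m_h` (with `m_{h+1} = n + 1`). -/
def nuList (n : ℕ) (bs : Finset (Finset ℕ)) : List ℕ :=
  let ms := ((bs.image fmin).sort (· ≤ ·)) ++ [n + 1]
  (List.range (bs.image fmin).card).map (fun r => ms.getD (r + 1) 0 - ms.getD r 0 - 1)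

/-- Concatenation of `replicate ν c` over a list of pairs `(c, ν)`. -/
def repeatEach : List (ℕ × ℕ) → List ℕ
  | [] => []
  | p :: r => List.replicate p.2 p.1 ++ repeatEach r

/-- The right endpoints `y_1 ≤ ⋯ ≤ y_{k-1}`: each block maximum `c_r` repeated
`ν_r` times, in increasing order. -/
def ysList (n : ℕ) (bs : Finset (Finset ℕ)) : List ℕ :=
  repeatEach (List.zip ((bs.image fmax).sort (· ≤ ·)) (nuList n bs))

/-- The left endpoints `x_1 < ⋯ < x_{k-1}`: the elements of `{1, …, n}` that are not
block maxima, in increasing order. -/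
def xsList (n : ℕ) (bs : Finset (Finset ℕ)) : List ℕ :=
  ((Finset.Icc 1 n).filter (fun i => i ∉ bs.image fmax)).sort (· ≤ ·)

/-- Greedy left-to-right selection of arcs: keep the first arc, and thereafter keep the
earliest arc whose left endpoint exceeds the right endpoint of the last kept arc. -/
def greedyArcs : List (ℕ × ℕ) → Option ℕ → List (ℕ × ℕ)
  | [], _ => []
  | a :: rest, none => a :: greedyArcs rest (some a.2)
  | a :: rest, some r =>
      if r < a.1 then a :: greedyArcs rest (some a.2) else greedyArcs rest (some r)

/-- The mingarc statistic: the sum of `n - y_i` over the greedily selected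
candidate arcs `[x_i, y_i]`. -/
def mingarc (n : ℕ) (bs : Finset (Finset ℕ)) : ℕ :=
  ((greedyArcs (List.zip (xsList n bs) (ysList n bs)) none).map (fun p => n - p.2)).sum

/-! ### The map η from polyominoes to noncrossing partitions -/

/-- Largest column index `i < m` with `colHeight lower i ≤ j`: the rightmost cell
adjacent to the floor in row `j`. -/
def eFloor {m k : ℕ} (P : Polyomino m k) (j : ℕ) : ℕ :=
  (((List.range m).filter (fun i => decide (colHeight P.lower i ≤ j))).getLastD 0)

/-- Smallest column index `i` with `colHeight upper i ≥ j + 1`: the leftmost cell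
adjacent to the ceiling in row `j` (with default `m - 1`). -/
def fCeil {m k : ℕ} (P : Polyomino m k) (j : ℕ) : ℕ :=
  (((List.range m).filter (fun i => decide (j + 1 ≤ colHeight P.upper i))).headD (m - 1))

/-- The number of cells adjacent to the ceiling in row `j`. -/
def rowCount {m k : ℕ} (P : Polyomino m k) (j : ℕ) : ℕ :=
  fCeil P (j + 1) - fCeil P j + 1

/-- Pick, `cnt` times, the largest label in `{1, …, L}` not used yet. -/
def pickRow : ℕ → ℕ → Finset ℕ → Finset ℕ
  | 0, _, _ => ∅
  | cnt + 1, L, used =>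
      let x := fmax ((Finset.Icc 1 L) \ used)
      insert x (pickRow cnt L (insert x used))

/-- The blocks of `η(P)`: label the cells adjacent to the floor `1, …, n` going bottom
to top, left to right (the label of the floor cell in column `i`, row `j` is
`i + j + 1`, and the labels present in rows `≤ j` are exactly `1, …, eFloor P j + j + 1`);
then going bottom to top, left to right over the cells adjacent to the ceiling, assign
to each the largest unused indexing label occurring in the same row or below; the
blocks are the label sets of the ceiling rows. -/
def etaBlocks {m k : ℕ} (P : Polyomino m k) : Finset (Finset ℕ) :=
  (((List.range k).foldl
      (fun st j =>
        let B := pickRow (rowCount P j) (eFloor P j + j + 1) st.1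
        (st.1 ∪ B, B :: st.2))
      ((∅ : Finset ℕ), ([] : List (Finset ℕ)))).2).toFinset

/-!
In a polyomino of size `m × k`, write `e j` and `f j` for the columns of the rightmost floor cell
and of the leftmost ceiling cell of row `j`. Row `j` consists of the columns `f j, …, e j`, of which
`f j, …, f (j + 1)` carry ceiling cells. Since there are `m + k - 1` ceiling cells in all, the area
is `∑ j, (e j - f (j + 1))`.

On the other side, in any partition of `{1, …, n}` the part of `ncArea` due to a block with maximum
`M` is `M` minus the total size of the blocks with maximum at most `M`. The block of row `j` of
`η P` has maximum `e j + j + 1`, these maxima increase with `j`, and the first `j + 1` rows use up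
`f (j + 1) + j + 1` labels, so that the difference is again `e j - f (j + 1)`.
-/

section LatticePath

variable {w : List Step}

@[simp] theorem countE_cons_E (w : List Step) : countE (Step.E :: w) = countE w + 1 := by
  simp [countE]

@[simp] theorem countE_cons_N (w : List Step) : countE (Step.N :: w) = countE w := by
  simp [countE]

@[simp] theorem countN_cons_E (w : List Step) : countN (Step.E :: w) = countN w := by
  simp [countN]

@[simp] theorem countN_cons_N (w : List Step) : countN (Step.N :: w) = countN w + 1 := by
  simp [countN]

theorem length_colHeightsAux (w : List Step) (h : ℕ) :
    (colHeightsAux w h).length = countE w := by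
  induction w generalizing h with
  | nil => rfl
  | cons s w ih => cases s <;> simp [colHeightsAux, ih]

theorem colHeightsAux_succ (w : List Step) (h : ℕ) :
    colHeightsAux w (h + 1) = (colHeightsAux w h).map (· + 1) := by
  induction w generalizing h with
  | nil => rfl
  | cons s w ih => cases s <;> simp [colHeightsAux, ih]

@[simp] theorem colHeight_cons_E_zero (w : List Step) : colHeight (Step.E :: w) 0 = 0 := rfl

@[simp] theorem colHeight_cons_E_succ (w : List Step) (i : ℕ) :
    colHeight (Step.E :: w) (i + 1) = colHeight w i := rfl

theorem colHeight_cons_N {i : ℕ} (hi : i < countE w) :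
    colHeight (Step.N :: w) i = colHeight w i + 1 := by
  have hi' : i < (colHeightsAux w 0).length := by rwa [length_colHeightsAux]
  simp [colHeight, colHeightsAux, colHeightsAux_succ, hi']

theorem colHeight_le_countN {i : ℕ} (hi : i < countE w) : colHeight w i ≤ countN w := by
  induction w generalizing i with
  | nil => simp [countE] at hi
  | cons s w ih =>
    cases s with
    | E =>
      cases i with
      | zero => simp
      | succ i => simpa using ih (by simpa using hi)
    | N =>
      rw [countE_cons_N] at hi
      simpa [colHeight_cons_N hi] using ih hi

theorem colHeight_mono {i j : ℕ} (hij : i ≤ j) (hj : j < countE w) :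
    colHeight w i ≤ colHeight w j := by
  induction w generalizing i j with
  | nil => simp [countE] at hj
  | cons s w ih =>
    cases s with
    | E =>
      cases i with
      | zero => simp
      | succ i =>
        obtain ⟨j, rfl⟩ : ∃ j', j = j' + 1 := ⟨j - 1, by omega⟩
        simpa using ih (by omega) (by simpa using hj)
    | N =>
      rw [countE_cons_N] at hj
      simpa [colHeight_cons_N hj, colHeight_cons_N (hij.trans_lt hj)] using ih hij hj

theorem mem_pathPts_iff {p : ℕ × ℕ} : p ∈ pathPts w ↔ ∃ i ≤ w.length, pathPos (w.take i) = p := by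
  simp [pathPts]

theorem origin_mem_pathPts (w : List Step) : (0, 0) ∈ pathPts w :=
  mem_pathPts_iff.2 ⟨0, Nat.zero_le _, rfl⟩

theorem mem_pathPts_cons_E {x y : ℕ} (h : (x, y) ∈ pathPts w) :
    (x + 1, y) ∈ pathPts (Step.E :: w) := by
  obtain ⟨i, hi, hp⟩ := mem_pathPts_iff.1 h
  rw [pathPos, Prod.mk.injEq] at hp
  exact mem_pathPts_iff.2 ⟨i + 1, by simpa using hi, by simp [pathPos, hp]⟩

theorem mem_pathPts_cons_N {x y : ℕ} (h : (x, y) ∈ pathPts w) :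
    (x, y + 1) ∈ pathPts (Step.N :: w) := by
  obtain ⟨i, hi, hp⟩ := mem_pathPts_iff.1 h
  rw [pathPos, Prod.mk.injEq] at hp
  exact mem_pathPts_iff.2 ⟨i + 1, by simpa using hi, by simp [pathPos, hp]⟩

theorem mem_pathPts_of_colHeight {x y : ℕ} (hx : x ≤ countE w) (hy : y ≤ countN w)
    (hleft : ∀ i < x, colHeight w i ≤ y) (hright : ∀ i < countE w, x ≤ i → y ≤ colHeight w i) :
    (x, y) ∈ pathPts w := by
  induction w generalizing x y with
  | nil =>
    obtain rfl : x = 0 := Nat.le_zero.1 hx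
    obtain rfl : y = 0 := Nat.le_zero.1 hy
    exact origin_mem_pathPts _
  | cons s w ih =>
    cases s with
    | E =>
      simp only [countE_cons_E, countN_cons_E] at hx hy hright
      cases x with
      | zero =>
        obtain rfl : y = 0 := by simpa using hright 0
        exact origin_mem_pathPts _
      | succ x =>
        refine mem_pathPts_cons_E (ih (by omega) hy (fun i hi => ?_) fun i hi hxi => ?_)
        · simpa using hleft (i + 1) (by omega)
        · simpa using hright (i + 1) (by omega) (by omega)
    | N =>
      simp only [countE_cons_N, countN_cons_N] at hx hy hright
      cases y with
      | zero =>
        obtain rfl : x = 0 := by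
          by_contra hx0
          have := hleft 0 (by omega)
          rw [colHeight_cons_N (by omega)] at this
          omega
        exact origin_mem_pathPts _
      | succ y =>
        refine mem_pathPts_cons_N (ih hx (by omega) (fun i hi => ?_) fun i hi hxi => ?_)
        · simpa [colHeight_cons_N (hi.trans_le hx)] using hleft i hi
        · simpa [colHeight_cons_N hi] using hright i hi hxi

end LatticePath

section FilterRange

variable {p : ℕ → Prop} [DecidablePred p] {N d i : ℕ}

theorem getLastD_filter_range_lt (p : ℕ → Prop) [DecidablePred p] (hd : d < N) :
    ((List.range N).filter (fun i => decide (p i))).getLastD d < N := by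
  have hmem : ((List.range N).filter (fun i => decide (p i))).getLastD d ∈
      d :: (List.range N).filter (fun i => decide (p i)) := List.getLastD_mem_cons
  rcases List.mem_cons.1 hmem with h | h
  · rwa [h]
  · exact List.mem_range.1 (List.mem_filter.1 h).1

theorem le_getLastD_filter_range_iff (hp : ∀ i j, i ≤ j → j < N → p j → p i) (h0 : p 0)
    (hi : i < N) :
    i ≤ ((List.range N).filter (fun i => decide (p i))).getLastD 0 ↔ p i := by
  induction N with
  | zero => omega
  | succ N ih =>
    rw [List.range_succ, List.filter_append]
    by_cases hN : p N
    · simpa [hN, Nat.le_of_lt_succ hi] using hp i N (Nat.le_of_lt_succ hi) (Nat.lt_succ_self N) hN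
    · simp only [List.filter_singleton, hN, decide_false, cond_false, List.append_nil]
      rcases (Nat.le_of_lt_succ hi).lt_or_eq with hlt | rfl
      · exact ih (fun i j hij hj => hp i j hij (hj.trans (Nat.lt_succ_self N))) hlt
      · have hpos : 0 < i := Nat.pos_of_ne_zero fun h => hN (h ▸ h0)
        simpa [hN] using getLastD_filter_range_lt p hpos

theorem headD_filter_range_lt (p : ℕ → Prop) [DecidablePred p] (hd : d < N) :
    ((List.range N).filter (fun i => decide (p i))).headD d < N := by
  rw [List.headD_eq_head?_getD, List.head?_filter]
  rcases h : (List.range N).find? (fun i => decide (p i)) with _ | a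
  · exact hd
  · exact List.mem_range.1 (List.mem_of_find?_eq_some h)

theorem headD_filter_range_le_iff (hp : ∀ i j, i ≤ j → j < N → p i → p j) (hi : i < N)
    (hd : i < d) : ((List.range N).filter (fun i => decide (p i))).headD d ≤ i ↔ p i := by
  rw [List.headD_eq_head?_getD, List.head?_filter]
  rcases h : (List.range N).find? (fun i => decide (p i)) with _ | a
  · have hnot : ¬ p i := by simpa using List.find?_eq_none.1 h i (List.mem_range.2 hi)
    simp [hnot, hd]
  · obtain ⟨hpa, -, hmin⟩ := List.find?_range_eq_some.1 h
    refine ⟨fun hai => hp a i hai hi (by simpa using hpa), fun hpi => ?_⟩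
    by_contra! hia
    simpa [hpi] using hmin i hia

end FilterRange

namespace Polyomino

section Heights

variable {m k : ℕ} (P : Polyomino m k)

theorem colHeight_lower_mono {i j : ℕ} (hij : i ≤ j) (hj : j < m) :
    colHeight P.lower i ≤ colHeight P.lower j :=
  colHeight_mono hij (P.lowerE.symm ▸ hj)

theorem colHeight_upper_mono {i j : ℕ} (hij : i ≤ j) (hj : j < m) :
    colHeight P.upper i ≤ colHeight P.upper j :=
  colHeight_mono hij (P.upperE.symm ▸ hj)

theorem colHeight_upper_le {i : ℕ} (hi : i < m) : colHeight P.upper i ≤ k :=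
  (colHeight_le_countN (P.upperE.symm ▸ hi)).trans_eq P.upperN

theorem eq_endpoint_of_colHeight {x y : ℕ} (hx : x ≤ m) (hy : y ≤ k)
    (hleft : ∀ i < x, colHeight P.upper i ≤ y)
    (hright : ∀ i < m, x ≤ i → y ≤ colHeight P.lower i) :
    (x = 0 ∧ y = 0) ∨ (x = m ∧ y = k) := by
  have hupper : (x, y) ∈ pathPts P.upper :=
    mem_pathPts_of_colHeight (P.upperE.symm ▸ hx) (P.upperN.symm ▸ hy) hleft
      (by rw [P.upperE]; exact fun i hi hxi => (hright i hi hxi).trans (P.above i hi))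
  have hlower : (x, y) ∈ pathPts P.lower :=
    mem_pathPts_of_colHeight (P.lowerE.symm ▸ hx) (P.lowerN.symm ▸ hy)
      (fun i hi => (P.above i (hi.trans_le hx)).trans (hleft i hi)) (by rwa [P.lowerE])
  have hmeet := Finset.mem_inter.2 ⟨hupper, hlower⟩
  rw [P.meet] at hmeet
  simpa using hmeet

end Heights

variable {m k : ℕ} (P : Polyomino (m + 1) k)

theorem colHeight_lower_zero : colHeight P.lower 0 = 0 := by
  have hend := P.eq_endpoint_of_colHeight (x := 0) (y := colHeight P.lower 0) (Nat.zero_le _)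
    ((P.above 0 (by omega)).trans (P.colHeight_upper_le (by omega))) (by simp)
    fun i hi hxi => P.colHeight_lower_mono hxi hi
  omega

theorem colHeight_upper_last : colHeight P.upper m = k := by
  have hend := P.eq_endpoint_of_colHeight (x := m + 1) (y := colHeight P.upper m) le_rfl
    (P.colHeight_upper_le (by omega)) (fun i hi => P.colHeight_upper_mono (by omega) (by omega))
    (by omega)
  omega

theorem colHeight_lower_succ_lt {i : ℕ} (hi : i < m) :
    colHeight P.lower (i + 1) < colHeight P.upper i := by
  by_contra! hle
  have hend := P.eq_endpoint_of_colHeight (x := i + 1) (y := colHeight P.upper i) (by omega)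
    (P.colHeight_upper_le (by omega)) (fun j hj => P.colHeight_upper_mono (by omega) (by omega))
    fun j hj hij => hle.trans (P.colHeight_lower_mono hij hj)
  omega

theorem eFloor_le (j : ℕ) : eFloor P j ≤ m :=
  Nat.le_of_lt_succ (getLastD_filter_range_lt _ m.succ_pos)

theorem le_eFloor_iff {i j : ℕ} (hi : i ≤ m) : i ≤ eFloor P j ↔ colHeight P.lower i ≤ j :=
  le_getLastD_filter_range_iff (p := fun i => colHeight P.lower i ≤ j)
    (fun _ _ hle hlt h => (P.colHeight_lower_mono hle hlt).trans h)
    (P.colHeight_lower_zero.trans_le (Nat.zero_le j)) (Nat.lt_succ_of_le hi)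

theorem fCeil_le (j : ℕ) : fCeil P j ≤ m :=
  Nat.le_of_lt_succ (headD_filter_range_lt _ (Nat.lt_succ_self m))

theorem fCeil_le_iff {i j : ℕ} (hi : i < m) : fCeil P j ≤ i ↔ j < colHeight P.upper i :=
  headD_filter_range_le_iff (p := fun i => j + 1 ≤ colHeight P.upper i)
    (fun _ _ hle hlt h => h.trans (P.colHeight_upper_mono hle hlt)) (Nat.lt_succ_of_lt hi) hi

theorem eFloor_mono : Monotone (eFloor P) := fun i j hij => by
  rw [P.le_eFloor_iff (P.eFloor_le i)]
  exact ((P.le_eFloor_iff (P.eFloor_le i)).1 le_rfl).trans hij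

theorem fCeil_mono : Monotone (fCeil P) := fun i j hij => by
  rcases (P.fCeil_le j).eq_or_lt with hj | hj
  · exact (P.fCeil_le i).trans_eq hj.symm
  · rw [P.fCeil_le_iff hj]
    exact hij.trans_lt ((P.fCeil_le_iff hj).1 le_rfl)

theorem fCeil_zero : fCeil P 0 = 0 := by
  rcases m.eq_zero_or_pos with rfl | hm
  · exact Nat.le_zero.1 (P.fCeil_le 0)
  · have hpos : 0 < colHeight P.upper 0 := Nat.zero_lt_of_lt (P.colHeight_lower_succ_lt hm)
    exact Nat.le_zero.1 ((P.fCeil_le_iff hm).2 hpos)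

theorem fCeil_last : fCeil P k = m := by
  refine (P.fCeil_le k).antisymm (Nat.le_of_not_lt fun hlt => ?_)
  have hk := (P.fCeil_le_iff hlt).1 le_rfl
  exact hk.not_ge (P.colHeight_upper_le (by omega))

theorem fCeil_succ_le_eFloor (j : ℕ) : fCeil P (j + 1) ≤ eFloor P j := by
  rw [P.le_eFloor_iff (P.fCeil_le _)]
  rcases hf : fCeil P (j + 1) with _ | i
  · simp [P.colHeight_lower_zero]
  · have hi : i < m := by have := P.fCeil_le (j + 1); omega
    have hU : ¬ j + 1 < colHeight P.upper i := by rw [← P.fCeil_le_iff hi]; omega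
    have hL := P.colHeight_lower_succ_lt hi
    omega

theorem filter_row_eq_Icc {j : ℕ} (hj : j < k) :
    (Finset.range (m + 1)).filter (fun i => colHeight P.lower i ≤ j ∧ j < colHeight P.upper i) =
      Finset.Icc (fCeil P j) (eFloor P j) := by
  ext i
  rw [Finset.mem_filter, Finset.mem_range, Finset.mem_Icc, and_comm (a := fCeil P j ≤ i)]
  have he := P.eFloor_le j
  rcases lt_trichotomy i m with hi | rfl | hi
  · rw [P.le_eFloor_iff hi.le, P.fCeil_le_iff hi]
    simp [hi.trans (Nat.lt_succ_self m)]
  · simp [P.le_eFloor_iff le_rfl, P.fCeil_le, P.colHeight_upper_last, hj]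
  · omega

theorem sum_colHeight_sub :
    ∑ i ∈ Finset.range (m + 1), (colHeight P.upper i - colHeight P.lower i) =
      ∑ j ∈ Finset.range k, (eFloor P j + 1 - fCeil P j) := by
  let IsCell (i j : ℕ) : Prop := colHeight P.lower i ≤ j ∧ j < colHeight P.upper i
  have hcol : ∀ i ∈ Finset.range (m + 1),
      ((Finset.range k).bipartiteAbove IsCell i).card =
        colHeight P.upper i - colHeight P.lower i := by
    intro i hi
    have hU := P.colHeight_upper_le (Finset.mem_range.1 hi)
    rw [← Nat.card_Ico]
    congr 1
    ext j
    simp only [Finset.mem_bipartiteAbove, Finset.mem_range, Finset.mem_Ico, IsCell]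
    omega
  have hrow : ∀ j ∈ Finset.range k,
      ((Finset.range (m + 1)).bipartiteBelow IsCell j).card = eFloor P j + 1 - fCeil P j := by
    intro j hj
    rw [← Nat.card_Icc, ← P.filter_row_eq_Icc (Finset.mem_range.1 hj)]
    rfl
  rw [← Finset.sum_congr rfl hcol, ← Finset.sum_congr rfl hrow]
  exact Finset.sum_card_bipartiteAbove_eq_sum_card_bipartiteBelow IsCell

theorem sum_rowCount (t : ℕ) : ∑ j ∈ Finset.range t, rowCount P j = fCeil P t + t := by
  induction t with
  | zero => simp [P.fCeil_zero]
  | succ t ih =>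
    have hf := P.fCeil_mono (Nat.le_add_right t 1)
    rw [Finset.sum_range_succ, ih, rowCount]
    omega

theorem area_eq_sum_sub : area P = ∑ j ∈ Finset.range k, (eFloor P j - fCeil P (j + 1)) := by
  have hrow (j : ℕ) :
      eFloor P j + 1 - fCeil P j = (eFloor P j - fCeil P (j + 1)) + rowCount P j := by
    have hf := P.fCeil_mono (Nat.le_add_right j 1)
    have he := P.fCeil_succ_le_eFloor j
    rw [rowCount]
    omega
  rw [area, P.sum_colHeight_sub]
  simp only [hrow, Finset.sum_add_distrib, P.sum_rowCount, P.fCeil_last]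
  omega

end Polyomino

section Fmax

variable {s : Finset ℕ} {x : ℕ}

theorem le_fmax (hx : x ∈ s) : x ≤ fmax s :=
  Finset.le_sup (f := id) hx

theorem fmax_mem (hs : s.Nonempty) : fmax s ∈ s := by
  obtain ⟨x, hx, hmax⟩ := Finset.exists_mem_eq_sup s hs id
  rwa [fmax, hmax]

theorem fmax_eq_of_mem_of_le (hx : x ∈ s) (hle : ∀ y ∈ s, y ≤ x) : fmax s = x :=
  (Finset.sup_le hle).antisymm (le_fmax hx)

end Fmax

namespace SetPartition

variable {n : ℕ} (π : SetPartition n)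

theorem biUnion_blocks : π.blocks.biUnion id = Finset.Icc 1 n := by
  ext i
  simp [π.cover]

theorem fmax_mem_of_mem_blocks {β : Finset ℕ} (hβ : β ∈ π.blocks) : fmax β ∈ β :=
  fmax_mem (Finset.nonempty_iff_ne_empty.2 fun h => π.not_empty_mem (h ▸ hβ))

theorem sum_card_filter_le {M : ℕ} (hM : M ≤ n) :
    ∑ γ ∈ π.blocks, (γ.filter (· ≤ M)).card = M := by
  have hdisj : (π.blocks : Set (Finset ℕ)).PairwiseDisjoint (Finset.filter (· ≤ M)) :=
    fun β hβ γ hγ hne => Finset.disjoint_filter_filter (π.disjoint β hβ γ hγ hne)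
  have hunion : π.blocks.biUnion (Finset.filter (· ≤ M)) = Finset.Icc 1 M := by
    calc π.blocks.biUnion (Finset.filter (· ≤ M))
        = (π.blocks.biUnion id).filter (· ≤ M) := (Finset.filter_biUnion ..).symm
      _ = Finset.Icc 1 M := by
          rw [π.biUnion_blocks]
          ext x
          simp only [Finset.mem_filter, Finset.mem_Icc]
          omega
  rw [← Finset.card_biUnion hdisj, hunion, Nat.card_Icc, Nat.add_sub_cancel]

theorem card_filter_le_fmax {β γ : Finset ℕ} (hβ : β ∈ π.blocks) (hγ : γ ∈ π.blocks) :
    (γ.filter (· ≤ fmax β)).card =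
      (γ.filter (fun i => i < fmax β ∧ fmax β < fmax γ)).card +
        if fmax γ ≤ fmax β then γ.card else 0 := by
  split_ifs with hle
  · rw [Finset.filter_true_of_mem fun x hx => (le_fmax hx).trans hle,
      Finset.filter_false_of_mem fun x _ hx => hx.2.not_ge hle, Finset.card_empty, zero_add]
  · have hne : γ ≠ β := fun h => hle (h ▸ le_rfl)
    have hnotMem : fmax β ∉ γ := fun h => Finset.disjoint_left.1 (π.disjoint γ hγ β hβ hne) h
      (π.fmax_mem_of_mem_blocks hβ)
    rw [add_zero]
    congr 1
    refine Finset.filter_congr fun x hx => ?_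
    have hx' : x ≠ fmax β := fun h => hnotMem (h ▸ hx)
    omega

theorem ncArea_blocks :
    ncArea π.blocks =
      ∑ β ∈ π.blocks, (fmax β - ∑ γ ∈ π.blocks with fmax γ ≤ fmax β, γ.card) := by
  refine Finset.sum_congr rfl fun β hβ => ?_
  have hβn : fmax β ≤ n :=
    (Finset.mem_Icc.1 ((π.cover _).2 ⟨β, hβ, π.fmax_mem_of_mem_blocks hβ⟩)).2
  have hsum := π.sum_card_filter_le hβn
  rw [Finset.sum_congr rfl fun γ hγ => π.card_filter_le_fmax hβ hγ, Finset.sum_add_distrib,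
    ← Finset.sum_filter] at hsum
  omega

end SetPartition

section PickRow

variable {cnt L : ℕ} {used : Finset ℕ}

theorem pickRow_subset_and_card (h : cnt ≤ (Finset.Icc 1 L \ used).card) :
    pickRow cnt L used ⊆ Finset.Icc 1 L \ used ∧ (pickRow cnt L used).card = cnt := by
  induction cnt generalizing used with
  | zero => simp [pickRow]
  | succ c ih =>
    set x := fmax (Finset.Icc 1 L \ used) with hx
    have hmem : x ∈ Finset.Icc 1 L \ used := fmax_mem (Finset.card_pos.1 (by omega))
    have herase : Finset.Icc 1 L \ insert x used = (Finset.Icc 1 L \ used).erase x :=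
      Finset.sdiff_insert ..
    obtain ⟨hsub, hcard⟩ := ih (used := insert x used) (by
      rw [herase, Finset.card_erase_of_mem hmem]
      omega)
    rw [herase] at hsub
    have hnotMem : x ∉ pickRow c L (insert x used) := fun h => Finset.notMem_erase _ _ (hsub h)
    rw [pickRow, ← hx, Finset.card_insert_of_notMem hnotMem, hcard]
    exact ⟨Finset.insert_subset hmem (hsub.trans (Finset.erase_subset _ _)), rfl⟩

theorem mem_pickRow_succ (hL : 1 ≤ L) (h : L ∉ used) : L ∈ pickRow (cnt + 1) L used := by
  have hmax : fmax (Finset.Icc 1 L \ used) = L :=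
    fmax_eq_of_mem_of_le (by simp [hL, h]) fun y hy =>
      (Finset.mem_Icc.1 (Finset.mem_sdiff.1 hy).1).2
  rw [pickRow, hmax]
  exact Finset.mem_insert_self _ _

end PickRow

namespace Polyomino

section Labels

variable {m k : ℕ} (P : Polyomino m k)

/-- The label of the rightmost floor cell of row `j`, which is also the number of labels in the
rows `≤ j`. -/
def lastLabel (j : ℕ) : ℕ := eFloor P j + j + 1

/-- The labels given to the ceiling cells of the rows `< j` in the construction of `η P`. Like
`rowBlock`, it is defined for all `j`, although the polyomino only has the rows `j < k`. -/
def usedLabels : ℕ → Finset ℕ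
  | 0 => ∅
  | j + 1 => usedLabels j ∪ pickRow (rowCount P j) (P.lastLabel j) (usedLabels j)

/-- The block of `η P` coming from row `j`: the set of labels of its ceiling cells. -/
def rowBlock (j : ℕ) : Finset ℕ := pickRow (rowCount P j) (P.lastLabel j) (P.usedLabels j)

theorem usedLabels_succ (j : ℕ) : P.usedLabels (j + 1) = P.usedLabels j ∪ P.rowBlock j := rfl

theorem usedLabels_eq_biUnion (j : ℕ) :
    P.usedLabels j = (Finset.range j).biUnion P.rowBlock := by
  induction j with
  | zero => rfl
  | succ j ih =>
    rw [usedLabels_succ, Finset.range_add_one, Finset.biUnion_insert, Finset.union_comm, ih]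

theorem etaBlocks_eq_image : etaBlocks P = (Finset.range k).image P.rowBlock := by
  have hfold (t : ℕ) :
      (List.range t).foldl
        (fun st j =>
          let B := pickRow (rowCount P j) (eFloor P j + j + 1) st.1
          (st.1 ∪ B, B :: st.2))
        ((∅ : Finset ℕ), ([] : List (Finset ℕ))) =
      (P.usedLabels t, ((List.range t).map P.rowBlock).reverse) := by
    induction t with
    | zero => rfl
    | succ t ih =>
      rw [List.range_succ, List.foldl_append, ih]
      simp [usedLabels, rowBlock, lastLabel]
  ext β
  simp [etaBlocks, hfold]

end Labels

variable {m k : ℕ} (P : Polyomino (m + 1) k)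

theorem lastLabel_strictMono : StrictMono P.lastLabel := fun i j hij => by
  have he := P.eFloor_mono hij.le
  rw [lastLabel, lastLabel]
  omega

theorem rowCount_le_card_sdiff {j : ℕ} {s : Finset ℕ} (hs : s.card = fCeil P j + j) :
    rowCount P j ≤ (Finset.Icc 1 (P.lastLabel j) \ s).card := by
  have hcard := Finset.le_card_sdiff s (Finset.Icc 1 (P.lastLabel j))
  have hf := P.fCeil_mono (Nat.le_add_right j 1)
  have he := P.fCeil_succ_le_eFloor j
  rw [lastLabel, Nat.card_Icc, hs] at hcard
  rw [rowCount, lastLabel]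
  omega

theorem card_usedLabels (j : ℕ) : (P.usedLabels j).card = fCeil P j + j := by
  induction j with
  | zero => simp [usedLabels, P.fCeil_zero]
  | succ j ih =>
    obtain ⟨hsub, hcard⟩ := pickRow_subset_and_card (P.rowCount_le_card_sdiff ih)
    rw [usedLabels, Finset.card_union_of_disjoint (Finset.disjoint_sdiff.mono_right hsub), ih,
      hcard, ← P.sum_rowCount, ← P.sum_rowCount, Finset.sum_range_succ]

theorem rowBlock_subset (j : ℕ) :
    P.rowBlock j ⊆ Finset.Icc 1 (P.lastLabel j) \ P.usedLabels j :=
  (pickRow_subset_and_card (P.rowCount_le_card_sdiff (P.card_usedLabels j))).1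

theorem card_rowBlock (j : ℕ) : (P.rowBlock j).card = rowCount P j :=
  (pickRow_subset_and_card (P.rowCount_le_card_sdiff (P.card_usedLabels j))).2

theorem one_le_and_le_lastLabel_of_mem_rowBlock {j x : ℕ} (hx : x ∈ P.rowBlock j) :
    1 ≤ x ∧ x ≤ P.lastLabel j :=
  Finset.mem_Icc.1 (Finset.mem_sdiff.1 (P.rowBlock_subset j hx)).1

theorem lastLabel_mem_rowBlock (j : ℕ) : P.lastLabel j ∈ P.rowBlock j := by
  refine mem_pickRow_succ (Nat.le_add_left 1 _) fun hused => ?_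
  rw [usedLabels_eq_biUnion, Finset.mem_biUnion] at hused
  obtain ⟨i, hi, hmem⟩ := hused
  exact (P.lastLabel_strictMono (Finset.mem_range.1 hi)).not_ge
    (P.one_le_and_le_lastLabel_of_mem_rowBlock hmem).2

theorem fmax_rowBlock (j : ℕ) : fmax (P.rowBlock j) = P.lastLabel j :=
  fmax_eq_of_mem_of_le (P.lastLabel_mem_rowBlock j)
    fun _ hx => (P.one_le_and_le_lastLabel_of_mem_rowBlock hx).2

theorem rowBlock_injective : Function.Injective P.rowBlock := fun i j hij =>
  P.lastLabel_strictMono.injective (by rw [← P.fmax_rowBlock, hij, P.fmax_rowBlock])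

theorem pairwise_disjoint_rowBlock : Pairwise (Function.onFun Disjoint P.rowBlock) := by
  refine (pairwise_disjoint_on _).2 fun i j hij => Finset.disjoint_left.2 fun x hxi hxj => ?_
  refine (Finset.mem_sdiff.1 (P.rowBlock_subset j hxj)).2 ?_
  rw [usedLabels_eq_biUnion]
  exact Finset.mem_biUnion.2 ⟨i, Finset.mem_range.2 hij, hxi⟩

theorem usedLabels_last : P.usedLabels k = Finset.Icc 1 (m + k) := by
  refine Finset.eq_of_subset_of_card_le (fun x hx => ?_) ?_
  · rw [usedLabels_eq_biUnion, Finset.mem_biUnion] at hx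
    obtain ⟨j, hj, hxj⟩ := hx
    rw [Finset.mem_range] at hj
    have hbounds := P.one_le_and_le_lastLabel_of_mem_rowBlock hxj
    have he := P.eFloor_le j
    rw [lastLabel] at hbounds
    exact Finset.mem_Icc.2 (by omega)
  · rw [P.card_usedLabels, P.fCeil_last, Nat.card_Icc, Nat.add_sub_cancel]

/-- The blocks of `η P` as a set partition of the `(m + 1) + k - 1` labels. -/
def etaPartition : SetPartition (m + k) where
  blocks := etaBlocks P
  not_empty_mem := by
    rw [etaBlocks_eq_image, Finset.mem_image]
    rintro ⟨j, -, hj⟩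
    simpa [hj] using P.lastLabel_mem_rowBlock j
  cover i := by
    rw [← P.usedLabels_last, usedLabels_eq_biUnion, etaBlocks_eq_image]
    simp
  disjoint := by
    simp only [etaBlocks_eq_image, Finset.forall_mem_image]
    exact fun i _ j _ hne => P.pairwise_disjoint_rowBlock (ne_of_apply_ne _ hne)

theorem sum_card_filter_fmax_le {j : ℕ} (hj : j < k) :
    ∑ γ ∈ etaBlocks P with fmax γ ≤ P.lastLabel j, γ.card = fCeil P (j + 1) + (j + 1) := by
  have hrows : (Finset.range k).filter (fun i => fmax (P.rowBlock i) ≤ P.lastLabel j) =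
      Finset.range (j + 1) := by
    ext i
    simp only [P.fmax_rowBlock, P.lastLabel_strictMono.le_iff_le, Finset.mem_filter,
      Finset.mem_range]
    omega
  rw [etaBlocks_eq_image, Finset.filter_image, hrows, Finset.sum_image P.rowBlock_injective.injOn]
  simp only [P.card_rowBlock, P.sum_rowCount]

theorem ncArea_etaBlocks :
    ncArea (etaBlocks P) = ∑ j ∈ Finset.range k, (eFloor P j - fCeil P (j + 1)) := by
  calc ncArea (etaBlocks P)
      = ∑ β ∈ etaBlocks P, (fmax β - ∑ γ ∈ etaBlocks P with fmax γ ≤ fmax β, γ.card) :=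
        P.etaPartition.ncArea_blocks
    _ = ∑ j ∈ Finset.range k,
          (P.lastLabel j - ∑ γ ∈ etaBlocks P with fmax γ ≤ P.lastLabel j, γ.card) := by
        conv_lhs => enter [1]; rw [etaBlocks_eq_image]
        simp only [Finset.sum_image P.rowBlock_injective.injOn, P.fmax_rowBlock]
    _ = ∑ j ∈ Finset.range k, (eFloor P j - fCeil P (j + 1)) := by
        refine Finset.sum_congr rfl fun j hj => ?_
        rw [P.sum_card_filter_fmax_le (Finset.mem_range.1 hj), lastLabel]
        omega

end Polyomino

/-- For all `n ≥ k ≥ 1` and every `P ∈ PP(n-k+1, k)`, the area of `P` equals the area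
of the noncrossing partition `η(P)`, i.e.
`area P = ∑_{β,β' ∈ η(P)} #{ i ∈ β' : i < max β < max β' }`. -/
theorem area_eta (n k : ℕ) (hk : 1 ≤ k) (hkn : k ≤ n) (P : Polyomino (n - k + 1) k) :
    area P = ncArea (etaBlocks P) := by
  rw [P.area_eq_sum_sub, P.ncArea_etaBlocks]

end QtN
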